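/- Let R be an integral domain, let t, s be natural numbers, and let ι = Fin t ⊕ Fin s be the index type for square matrices of size t + s over R. Let D be a t×t diagonal matrix over R all of whose diagonal entries are nonzero, and set Φ = fromBlocks(D, 0, 0, 0). Let U, V be invertible ι×ι matrices over R and set B = V⁻¹ · Φ · U⁻¹. Then for every ι×ι matrix A over R and any two matrices X₁, X₂ with B·X₁ = A and B·X₂ = A, one has (U · fromBlocks(I_t, 0, 0, 0) · U⁻¹) · X₁ = (U · fromBlocks(I_t, 0, 0, 0) · U⁻¹) · X₂. (All solutions of B·X = A have the same image under the projection U·diag(I_t,0)·U⁻¹, which is why the left least common multiple of the solutions is well defined by this common value.) -/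

import Mathlib

/-! Injectivity of `V⁻¹` and of `D` lets both be cancelled from `V⁻¹ * diag(D, 0) * U⁻¹ * X = A`,
so that `A` determines the upper block of rows of `U⁻¹ * X`; this block is all that `diag(1, 0)`
retains of `U⁻¹ * X`. -/

section

open Matrix Function

variable {R k l l' m n p q r : Type*} [Fintype m] [Fintype n]

theorem mulVec_diagonal_injective_iff [NonUnitalNonAssocSemiring R] [DecidableEq m] {d : m → R} :
    Injective (diagonal d).mulVec ↔ ∀ i, IsLeftRegular (d i) := by
  have mulVec_eq_mul : (diagonal d).mulVec = (d * ·) :=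
    funext fun v ↦ funext (mulVec_diagonal d v)
  rw [mulVec_eq_mul]
  exact Pi.isLeftRegular_iff

theorem mul_right_injective_of_mulVec_injective [NonUnitalNonAssocSemiring R] {A : Matrix l m R}
    (hA : Injective A.mulVec) : Injective fun X : Matrix m k R ↦ A * X :=
  fun _ _ h ↦ ext_col fun j ↦ hA (congrFun (congrArg col h) j)

variable [Semiring R]

theorem fromBlocks_zero_zero_zero_mul (D : Matrix l m R) (X : Matrix (m ⊕ n) k R) :
    (fromBlocks D 0 0 0 : Matrix (l ⊕ l') (m ⊕ n) R) * X = fromRows (D * X.toRows₁) 0 := by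
  conv_lhs => rw [← fromRows_toRows X, fromBlocks_mul_fromRows]
  simp only [Matrix.zero_mul, add_zero]

theorem fromBlocks_zero_zero_zero_mul_eq_iff {D : Matrix l m R} (hD : Injective D.mulVec)
    {X Y : Matrix (m ⊕ n) k R} :
    (fromBlocks D 0 0 0 : Matrix (l ⊕ l') (m ⊕ n) R) * X =
        (fromBlocks D 0 0 0 : Matrix (l ⊕ l') (m ⊕ n) R) * Y ↔
      X.toRows₁ = Y.toRows₁ := by
  rw [fromBlocks_zero_zero_zero_mul, fromBlocks_zero_zero_zero_mul, fromRows_ext_iff,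
    and_iff_left rfl]
  exact (mul_right_injective_of_mulVec_injective hD).eq_iff

theorem projection_of_solutions_well_defined_general [Fintype l] [Fintype l'] [Fintype q]
    [DecidableEq m] {D : Matrix l m R} (hD : Injective D.mulVec)
    {V : Matrix p (l ⊕ l') R} (hV : Injective V.mulVec)
    (U : Matrix r (m ⊕ n) R) (W : Matrix (m ⊕ n) q R) {X₁ X₂ : Matrix q k R}
    (h : V * (fromBlocks D 0 0 0 : Matrix (l ⊕ l') (m ⊕ n) R) * W * X₁ =
      V * (fromBlocks D 0 0 0 : Matrix (l ⊕ l') (m ⊕ n) R) * W * X₂) :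
    U * (fromBlocks 1 0 0 0 : Matrix (m ⊕ n) (m ⊕ n) R) * W * X₁ =
      U * (fromBlocks 1 0 0 0 : Matrix (m ⊕ n) (m ⊕ n) R) * W * X₂ := by
  simp only [Matrix.mul_assoc] at h ⊢
  have upper_rows_eq : (W * X₁).toRows₁ = (W * X₂).toRows₁ :=
    (fromBlocks_zero_zero_zero_mul_eq_iff hD).1 (mul_right_injective_of_mulVec_injective hV h)
  rw [fromBlocks_zero_zero_zero_mul, fromBlocks_zero_zero_zero_mul, upper_rows_eq]

end

/-- All solutions of `B * X = A`, where `B = V⁻¹ * fromBlocks(D, 0, 0, 0) * U⁻¹`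
with `D` diagonal with nonzero diagonal entries and `U, V` invertible, have the
same image under left multiplication by the projection
`U * fromBlocks(I, 0, 0, 0) * U⁻¹`. -/
theorem projection_of_solutions_well_defined
    (R : Type*) [CommRing R] [IsDomain R] (t s : ℕ)
    (d : Fin t → R) (hd : ∀ i, d i ≠ 0)
    (U V : Matrix (Fin t ⊕ Fin s) (Fin t ⊕ Fin s) R)
    (hU : IsUnit U) (hV : IsUnit V) :
    letI Φ : Matrix (Fin t ⊕ Fin s) (Fin t ⊕ Fin s) R :=
      Matrix.fromBlocks (Matrix.diagonal d) 0 0 0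
    letI B := V⁻¹ * Φ * U⁻¹
    ∀ (A X₁ X₂ : Matrix (Fin t ⊕ Fin s) (Fin t ⊕ Fin s) R),
      B * X₁ = A → B * X₂ = A →
        (U * Matrix.fromBlocks 1 0 0 0 * U⁻¹) * X₁ =
          (U * Matrix.fromBlocks 1 0 0 0 * U⁻¹) * X₂ := by
  exact fun _ _ _ h₁ h₂ ↦ projection_of_solutions_well_defined_general
    (mulVec_diagonal_injective_iff.2 fun i ↦ (IsRegular.of_ne_zero (hd i)).left)
    (Matrix.mulVec_injective_of_isUnit (Matrix.isUnit_nonsing_inv_iff.2 hV)) U U⁻¹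
    (h₁.trans h₂.symm)
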